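/- arXiv:2605.26237 — 2 statements merged into one kernel-verified Lean document; each statement's English description precedes it below -/
import Mathlib

section
/- Let W carry a degree assignment (d_c)_{c∈C} and a combinatorial quasi-fiber structure (g, (m_c), B) of rank r. Assume: (a) for every P ∈ B, every δ ∈ Δ_P and every s ∈ {1,…,r} with s ≠ g(φ_P(δ)), M_s(δ) = 0 in k; (b) Σ_{c∈g^{-1}(s)} d_c·m_c ≡ 0 (mod p) for every s ∈ {1,…,r}. Then for all a,b ∈ k^r, ω_a ∧ ω_b = 0 in A²_{W,k}. Moreover, if for each s ∈ {1,…,r} there exists c ∈ g^{-1}(s) with p ∤ m_c, then for every a ∈ k^r, dim_k H¹(A*_{W,k}, ·∧ω_a) ≥ r − 1. (Combinatorial form of Theorem 'fibered', part 2, the case of a quasi fiber-type curve of index divisible by p.) -/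
/-!
Modulo `I_P` the class of `ψ^δ ∧ ψ^δ'` is a coboundary: it equals `e δ' - e δ`, where `e δ` is the
class of `ψ^{δ₀} ∧ ψ^δ` for a fixed branch `δ₀` at `P`. As the multiplicities are symmetric, the
coefficient of `e δ` in the `P`-component of `α ∧ β` is exactly the left-hand side of the resonance
condition at `δ`. For `α = ω_a` the sum `∑_j μ(δ,j) α_j` occurring there is `∑_s M_s(δ) a_s`, and
only the quasi-fiber `t` of `δ` contributes to it: the other `M_s(δ)` vanish by assumption at the
base points, and elsewhere because all branches lie in the same quasi-fiber. Both products in the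
resonance condition of `(ω_a, ω_b)` are therefore `m_{φ(δ)} a_t b_t M_t(δ)`. The component at
infinity vanishes because each quasi-fiber has total degree divisible by `p`.

Hence the kernel of `· ∧ ω_a` contains the image of the linear map `b ↦ ω_b`, which is injective
as soon as every quasi-fiber has a component of multiplicity prime to `p`. Dividing by the line
spanned by `ω_a` loses at most one of these `r` dimensions.
-/

open scoped Classical

/-- The weak combinatorial type of a plane projective curve. -/
structure WeakComb (p : ℕ) where
  /-- the set of irreducible components -/
  C : Type
  [fintypeC : Fintype C]
  [decEqC : DecidableEq C]
  [nonemptyC : Nonempty C]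
  /-- the set of singular points -/
  S : Type
  [fintypeS : Fintype S]
  [decEqS : DecidableEq S]
  /-- the local branches at each singular point -/
  Δ : S → Type
  [fintypeΔ : ∀ P, Fintype (Δ P)]
  [decEqΔ : ∀ P, DecidableEq (Δ P)]
  /-- each branch belongs to a component -/
  φ : ∀ P, Δ P → C
  /-- local intersection multiplicities of pairs of branches -/
  μ : ∀ P, Δ P → Δ P → ℕ
  μ_symm : ∀ P δ δ', φ P δ ≠ φ P δ' → μ P δ δ' = μ P δ' δ
  μ_pos : ∀ P δ δ', φ P δ ≠ φ P δ' → 0 < μ P δ δ'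

attribute [instance] WeakComb.fintypeC WeakComb.decEqC WeakComb.nonemptyC
attribute [instance] WeakComb.fintypeS WeakComb.decEqS WeakComb.fintypeΔ WeakComb.decEqΔ

namespace WeakComb

variable {p : ℕ} (W : WeakComb p)

/-- μ_P(δ,δ') with the convention that it vanishes on pairs of branches of the same component. -/
def muk (P : W.S) (δ δ' : W.Δ P) : ℕ :=
  if W.φ P δ = W.φ P δ' then 0 else W.μ P δ δ'

/-- μ_P(δ, j): the multiplicity of intersection of the branch δ with the component j. -/
def muC (P : W.S) (δ : W.Δ P) (j : W.C) : ℕ :=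
  ∑ δ' : W.Δ P, if W.φ P δ' = j then W.muk P δ δ' else 0

/-- A degree assignment: positive degrees satisfying the Bezout condition. -/
def IsDegree (d : W.C → ℕ) : Prop :=
  (∀ i, 0 < d i) ∧
  ∀ i j, i ≠ j →
    d i * d j = ∑ P : W.S, ∑ δ : W.Δ P, if W.φ P δ = i then W.muC P δ j else 0

/-- The basis vector σ_i of A¹ = (C → ZMod p). -/
noncomputable def sigma (i : W.C) : W.C → ZMod p := Pi.single i 1

/-- The basis vector ψ_P^δ of A_P = (Δ_P → ZMod p). -/
noncomputable def psi (P : W.S) (δ : W.Δ P) : W.Δ P → ZMod p := Pi.single δ 1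

/-- ψ_P^δ ∧ ψ_P^δ' as an element of Λ² A_P. -/
noncomputable def psiW (P : W.S) (δ δ' : W.Δ P) : ⋀[ZMod p]^2 (W.Δ P → ZMod p) :=
  ⟨ExteriorAlgebra.ιMulti (ZMod p) 2 ![W.psi P δ, W.psi P δ'],
   ExteriorAlgebra.ιMulti_range (ZMod p) 2 (Set.mem_range_self _)⟩

/-- The subspace I_P of Λ² A_P. -/
noncomputable def IP (P : W.S) : Submodule (ZMod p) (⋀[ZMod p]^2 (W.Δ P → ZMod p)) :=
  Submodule.span (ZMod p)
    ({x | ∃ δ1 δ2 δ3 : W.Δ P, x = W.psiW P δ1 δ2 + W.psiW P δ2 δ3 + W.psiW P δ3 δ1} ∪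
     {x | (∀ δ δ' : W.Δ P, W.φ P δ = W.φ P δ') ∧ ∃ δ1 δ2 : W.Δ P, x = W.psiW P δ1 δ2})

/-- The degree-two part A² = A^{2,0} ⊕ A^{2,∞} of the Combinatorial Aomoto algebra. -/
abbrev A2 (d : W.C → ℕ) : Type :=
  ((P : W.S) → (⋀[ZMod p]^2 (W.Δ P → ZMod p)) ⧸ W.IP P) ×
  ({i : W.C // p ∣ d i} → ZMod p)

/-- The wedge product A¹ × A¹ → A², extending σ_i ∧ σ_j bilinearly. -/
noncomputable def wedge (d : W.C → ℕ) (α β : W.C → ZMod p) : W.A2 d :=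
  (fun P => ∑ δ : W.Δ P, ∑ δ' : W.Δ P,
      (α (W.φ P δ) * β (W.φ P δ') * (W.muk P δ δ' : ZMod p)) •
        Submodule.Quotient.mk (W.psiW P δ δ'),
   fun i => α i.1 * (∑ j : W.C, (d j : ZMod p) * β j)
          - β i.1 * (∑ j : W.C, (d j : ZMod p) * α j))

/-- The linear map ·∧α : A¹ → A², β ↦ β ∧ α. -/
noncomputable def wedgeL (d : W.C → ℕ) (α : W.C → ZMod p) :
    (W.C → ZMod p) →ₗ[ZMod p] W.A2 d where
  toFun β := W.wedge d β α
  map_add' β γ := by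
    refine Prod.ext ?_ ?_
    · funext P
      simp only [wedge, Pi.add_apply, Prod.fst_add]
      rw [← Finset.sum_add_distrib]
      refine Finset.sum_congr rfl fun δ _ => ?_
      rw [← Finset.sum_add_distrib]
      refine Finset.sum_congr rfl fun δ' _ => ?_
      rw [← add_smul, add_mul, add_mul]
    · funext i
      simp only [wedge, Pi.add_apply, Prod.snd_add]
      rw [show (∑ x : W.C, (d x : ZMod p) * (β x + γ x))
            = (∑ x : W.C, (d x : ZMod p) * β x) + ∑ x : W.C, (d x : ZMod p) * γ x by
        rw [← Finset.sum_add_distrib]; exact Finset.sum_congr rfl fun x _ => by ring]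
      ring
  map_smul' c β := by
    refine Prod.ext ?_ ?_
    · funext P
      simp only [wedge, Pi.smul_apply, smul_eq_mul, RingHom.id_apply, Prod.smul_fst]
      rw [Finset.smul_sum]
      refine Finset.sum_congr rfl fun δ _ => ?_
      rw [Finset.smul_sum]
      refine Finset.sum_congr rfl fun δ' _ => ?_
      rw [smul_smul]
      ring_nf
    · funext i
      simp only [wedge, Pi.smul_apply, smul_eq_mul, RingHom.id_apply, Prod.smul_snd]
      rw [show (∑ x : W.C, (d x : ZMod p) * (c * β x)) = c * ∑ x : W.C, (d x : ZMod p) * β x by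
        rw [Finset.mul_sum]; exact Finset.sum_congr rfl fun x _ => by ring]
      ring

/-- The kernel of ·∧α : A¹ → A². -/
noncomputable def wedgeKer (d : W.C → ℕ) (α : W.C → ZMod p) :
    Submodule (ZMod p) (W.C → ZMod p) :=
  LinearMap.ker (W.wedgeL d α)

/-- H¹ of the Combinatorial Aomoto complex with differential ·∧α. -/
noncomputable abbrev H1 (d : W.C → ℕ) (α : W.C → ZMod p) :=
  (W.wedgeKer d α) ⧸
    (Submodule.comap (W.wedgeKer d α).subtype (Submodule.span (ZMod p) {α}))

end WeakComb

namespace WeakComb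

variable {p : ℕ} (W : WeakComb p)

/-- The resonance condition for (α,β) at the branch δ of the point P. -/
def ResCond (α β : W.C → ZMod p) (P : W.S) (δ : W.Δ P) : Prop :=
  β (W.φ P δ) * (∑ j : W.C, (W.muC P δ j : ZMod p) * α j)
    - α (W.φ P δ) * (∑ j : W.C, (W.muC P δ j : ZMod p) * β j) = 0

/-- P is a p-transversal point for the pair of components i ≠ j. -/
def PTransPoint (P : W.S) (i j : W.C) : Prop :=
  i ≠ j ∧ (∀ δ : W.Δ P, W.φ P δ = i ∨ W.φ P δ = j) ∧
  (∃ δ : W.Δ P, W.φ P δ = i) ∧ (∃ δ : W.Δ P, W.φ P δ = j) ∧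
  ((∃ δ : W.Δ P, W.φ P δ = i ∧ ((W.muC P δ j : ZMod p) ≠ 0)) ∨
   (∃ δ : W.Δ P, W.φ P δ = j ∧ ((W.muC P δ i : ZMod p) ≠ 0)))

/-- The components i and j are p-transversal at a point. -/
def PTransComponents (i j : W.C) : Prop := ∃ P : W.S, W.PTransPoint P i j

/-- α is non-coordinate if all its coordinates are nonzero. -/
def NonCoordinate (α : W.C → ZMod p) : Prop := ∀ i, α i ≠ 0

end WeakComb

/-- The setoid (partition) obtained from s by merging the classes of c₀ and c₁. -/
def mergeSetoid {α : Type*} (s : Setoid α) (c₀ c₁ : α) : Setoid α :=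
  Relation.EqvGen.setoid (fun a b => s.r a b ∨ (a = c₀ ∧ b = c₁))

namespace WeakComb

variable {p : ℕ} (W : WeakComb p)

/-- W is p-transversal at P with respect to (α, π), where the surjection π is encoded by the
setoid s of its fibres; the two classes π(φ_P(Δ_P)) = {i',j'} are those of c₀ and c₁. -/
def PTransversalAt (α : W.C → ZMod p) (s : Setoid W.C) (P : W.S) (c₀ c₁ : W.C) : Prop :=
  ¬ s.r c₀ c₁ ∧
  (∀ δ : W.Δ P, s.r (W.φ P δ) c₀ ∨ s.r (W.φ P δ) c₁) ∧
  (∃ δ : W.Δ P, s.r (W.φ P δ) c₀) ∧ (∃ δ : W.Δ P, s.r (W.φ P δ) c₁) ∧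
  ∃ δ : W.Δ P, s.r (W.φ P δ) c₀ ∧
    (∑ δ' : W.Δ P, if s.r (W.φ P δ') c₁
        then (W.muk P δ δ' : ZMod p) * α (W.φ P δ') else 0) ≠ 0

/-- A p-reduction step with respect to α. -/
def RedStep (α : W.C → ZMod p) (s s' : Setoid W.C) : Prop :=
  ∃ (P : W.S) (c₀ c₁ : W.C), W.PTransversalAt α s P c₀ c₁ ∧ s' = mergeSetoid s c₀ c₁

/-- W is completely p-reductive with respect to α: starting from the identity partition (⊥),
some finite sequence of p-reduction steps reaches the one-class partition (⊤). -/
def CompletelyPReductive (α : W.C → ZMod p) : Prop :=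
  Relation.ReflTransGen (W.RedStep α) ⊥ ⊤

/-- β is π-proportional to α, for the surjection π encoded by the setoid s: on each class
of s, β is a scalar multiple of α. -/
def Proportional (s : Setoid W.C) (α β : W.C → ZMod p) : Prop :=
  ∀ c : W.C, ∃ l : ZMod p, ∀ c', s.r c c' → β c' = l * α c'

end WeakComb

/-- A combinatorial quasi-fiber structure of rank r on W. -/
structure QuasiFiber {p : ℕ} (W : WeakComb p) (r : ℕ) where
  /-- which quasi-fiber each component belongs to -/
  g : W.C → Fin r
  g_surj : Function.Surjective g
  /-- multiplicities of components inside the quasi-fibers -/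
  m : W.C → ℕ
  m_pos : ∀ c, 0 < m c
  /-- the set of base points -/
  B : Set W.S
  fiber_off_base : ∀ P : W.S, P ∉ B → ∀ δ δ' : W.Δ P, g (W.φ P δ) = g (W.φ P δ')

namespace WeakComb

variable {p : ℕ} (W : WeakComb p) {r : ℕ}

/-- M_s(δ) for a branch δ at a base point P. -/
noncomputable def Mcoef (F : QuasiFiber W r) (P : W.S) (δ : W.Δ P) (s : Fin r) : ZMod p :=
  ∑ δ' : W.Δ P,
    if W.φ P δ' ≠ W.φ P δ ∧ F.g (W.φ P δ') = s
      then ((F.m (W.φ P δ') * W.μ P δ δ' : ℕ) : ZMod p) else 0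

/-- ω_a = Σ_c m_c · a_{g(c)} · σ_c ∈ A¹. -/
noncomputable def omega (F : QuasiFiber W r) (a : Fin r → ZMod p) : W.C → ZMod p :=
  fun c => (F.m c : ZMod p) * a (F.g c)

/-- The restricted combinatorics W°_s of the quasi-fiber s. -/
noncomputable def restrict (F : QuasiFiber W r) (s : Fin r) : WeakComb p where
  C := {c : W.C // F.g c = s}
  fintypeC := Fintype.ofFinite _
  decEqC := inferInstance
  nonemptyC := by obtain ⟨c, hc⟩ := F.g_surj s; exact ⟨⟨c, hc⟩⟩
  S := {P : W.S // Nonempty (W.Δ P) ∧ ∀ δ : W.Δ P, F.g (W.φ P δ) = s}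
  fintypeS := Fintype.ofFinite _
  decEqS := inferInstance
  Δ := fun P => W.Δ P.1
  fintypeΔ := fun P => inferInstance
  decEqΔ := fun P => inferInstance
  φ := fun P δ => ⟨W.φ P.1 δ, P.2.2 δ⟩
  μ := fun P δ δ' => W.μ P.1 δ δ'
  μ_symm := fun P δ δ' h => W.μ_symm P.1 δ δ' (fun e => h (Subtype.ext e))
  μ_pos := fun P δ δ' h => W.μ_pos P.1 δ δ' (fun e => h (Subtype.ext e))

/-- The restriction ω_a|_s of ω_a to the restricted combinatorics W°_s. -/
noncomputable def omegaRes (F : QuasiFiber W r) (a : Fin r → ZMod p) (s : Fin r) :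
    (W.restrict F s).C → ZMod p :=
  fun c => (F.m c.1 : ZMod p) * a s

end WeakComb

lemma sum_smul_sub_of_symm {ι R M : Type*} [Fintype ι] [CommRing R] [AddCommGroup M] [Module R M]
    {m : ι → ι → R} (hm : ∀ i j, m i j = m j i) (a b : ι → R) (e : ι → M) :
    ∑ i, ∑ j, (a i * b j * m i j) • (e j - e i) =
      ∑ i, (b i * ∑ j, m i j * a j - a i * ∑ j, m i j * b j) • e i := by
  simp only [smul_sub, sub_smul, Finset.sum_sub_distrib, Finset.mul_sum, Finset.sum_smul]
  congr 1
  · rw [Finset.sum_comm]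
    refine Finset.sum_congr rfl fun i _ => Finset.sum_congr rfl fun j _ => ?_
    rw [hm j i, mul_comm (a j), mul_assoc, mul_comm (a j)]
  · refine Finset.sum_congr rfl fun i _ => Finset.sum_congr rfl fun j _ => ?_
    rw [mul_assoc, mul_comm (b j)]

lemma finrank_le_finrank_quotient_comap_span_singleton_add_one {K V : Type*} [DivisionRing K]
    [AddCommGroup V] [Module K V] (N : Submodule K V) [FiniteDimensional K N] (x : V) :
    Module.finrank K N ≤
      Module.finrank K (N ⧸ (Submodule.span K {x}).comap N.subtype) + 1 := by
  have hline : Module.finrank K ((Submodule.span K {x}).comap N.subtype) ≤ 1 := calc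
    _ = Module.finrank K (((Submodule.span K {x}).comap N.subtype).map N.subtype) :=
      (Submodule.finrank_map_subtype_eq _ _).symm
    _ ≤ Module.finrank K (Submodule.span K {x}) :=
      Submodule.finrank_mono (Submodule.map_comap_le _ _)
    _ ≤ 1 := by simpa using finrank_span_le_card (R := K) {x}
  rw [← Submodule.finrank_quotient_add_finrank ((Submodule.span K {x}).comap N.subtype)]
  exact Nat.add_le_add_left hline _

namespace WeakComb

variable {p : ℕ} (W : WeakComb p)

lemma muk_comm (P : W.S) (δ δ' : W.Δ P) : W.muk P δ δ' = W.muk P δ' δ := by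
  by_cases h : W.φ P δ = W.φ P δ'
  · simp [muk, h]
  · simp [muk, h, Ne.symm h, W.μ_symm P δ δ' h]

lemma sum_muC_mul (P : W.S) (δ : W.Δ P) (α : W.C → ZMod p) :
    ∑ j, (W.muC P δ j : ZMod p) * α j = ∑ δ', (W.muk P δ δ' : ZMod p) * α (W.φ P δ') := by
  simp only [muC, Nat.cast_sum, Nat.cast_ite, Nat.cast_zero, Finset.sum_mul, ite_mul, zero_mul]
  rw [Finset.sum_comm]
  simp

lemma psiW_swap (P : W.S) (δ δ' : W.Δ P) : W.psiW P δ' δ = -W.psiW P δ δ' := by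
  have h := (exteriorPower.ιMulti (ZMod p) 2).map_swap ![W.psi P δ, W.psi P δ']
    (i := 0) (j := 1) (by decide)
  rwa [show ![W.psi P δ, W.psi P δ'] ∘ Equiv.swap (0 : Fin 2) 1 = ![W.psi P δ', W.psi P δ] by
    ext i; fin_cases i <;> simp] at h

lemma mk_psiW_eq_sub (P : W.S) (δ₀ δ δ' : W.Δ P) :
    (Submodule.Quotient.mk (W.psiW P δ δ') : _ ⧸ W.IP P) =
      Submodule.Quotient.mk (W.psiW P δ₀ δ') - Submodule.Quotient.mk (W.psiW P δ₀ δ) := by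
  have h : W.psiW P δ₀ δ + W.psiW P δ δ' + W.psiW P δ' δ₀ ∈ W.IP P :=
    Submodule.subset_span (Or.inl ⟨δ₀, δ, δ', rfl⟩)
  rw [← Submodule.Quotient.mk_sub, Submodule.Quotient.eq]
  convert h using 1
  rw [W.psiW_swap P δ₀ δ']
  abel

lemma wedge_fst_apply_eq_sum (d : W.C → ℕ) (α β : W.C → ZMod p) (P : W.S) (δ₀ : W.Δ P) :
    (W.wedge d α β).1 P =
      ∑ δ, (β (W.φ P δ) * (∑ j, (W.muC P δ j : ZMod p) * α j)
        - α (W.φ P δ) * (∑ j, (W.muC P δ j : ZMod p) * β j)) •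
          Submodule.Quotient.mk (W.psiW P δ₀ δ) := by
  let e (δ : W.Δ P) : _ ⧸ W.IP P := Submodule.Quotient.mk (W.psiW P δ₀ δ)
  have hwedge : (W.wedge d α β).1 P = ∑ δ, ∑ δ',
      (α (W.φ P δ) * β (W.φ P δ') * (W.muk P δ δ' : ZMod p)) • (e δ' - e δ) :=
    Finset.sum_congr rfl fun δ _ => Finset.sum_congr rfl fun δ' _ => by
      rw [W.mk_psiW_eq_sub P δ₀]
  simp only [W.sum_muC_mul]
  exact hwedge.trans <| sum_smul_sub_of_symm (fun δ δ' => congrArg Nat.cast (W.muk_comm P δ δ'))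
    (fun δ => α (W.φ P δ)) (fun δ => β (W.φ P δ)) e

lemma wedge_fst_apply_eq_zero_of_resCond (d : W.C → ℕ) {α β : W.C → ZMod p} {P : W.S}
    (h : ∀ δ, W.ResCond α β P δ) : (W.wedge d α β).1 P = 0 := by
  rcases isEmpty_or_nonempty (W.Δ P) with _ | ⟨⟨δ₀⟩⟩
  · simp [wedge]
  · rw [W.wedge_fst_apply_eq_sum d α β P δ₀]
    exact Finset.sum_eq_zero fun δ _ => by rw [h δ, zero_smul]

lemma wedge_eq_zero_of_resCond (d : W.C → ℕ) {α β : W.C → ZMod p}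
    (h : ∀ P δ, W.ResCond α β P δ) (hα : ∑ j, (d j : ZMod p) * α j = 0)
    (hβ : ∑ j, (d j : ZMod p) * β j = 0) : W.wedge d α β = 0 := by
  refine Prod.ext (funext fun P => W.wedge_fst_apply_eq_zero_of_resCond d (h P)) ?_
  funext i
  simp [wedge, hα, hβ]

end WeakComb

namespace QuasiFiber

variable {p : ℕ} {W : WeakComb p} {r : ℕ} (F : QuasiFiber W r)

lemma sum_mul_omega (f : W.C → ZMod p) (a : Fin r → ZMod p) :
    ∑ c, f c * W.omega F a c = ∑ s, (∑ c, if F.g c = s then f c * F.m c else 0) * a s := by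
  simp only [WeakComb.omega, Finset.sum_mul, ite_mul, zero_mul]
  rw [Finset.sum_comm]
  simp [mul_assoc]

lemma sum_degree_mul_omega_eq_zero {d : W.C → ℕ}
    (hd : ∀ s : Fin r, ((∑ c : W.C, if F.g c = s then d c * F.m c else 0 : ℕ) : ZMod p) = 0)
    (a : Fin r → ZMod p) : ∑ c, (d c : ZMod p) * W.omega F a c = 0 := by
  push_cast at hd
  simp [F.sum_mul_omega, hd]

lemma Mcoef_eq_sum_muC (P : W.S) (δ : W.Δ P) (s : Fin r) :
    W.Mcoef F P δ s = ∑ c, if F.g c = s then (W.muC P δ c : ZMod p) * F.m c else 0 := by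
  have h := W.sum_muC_mul P δ fun c => if F.g c = s then (F.m c : ZMod p) else 0
  simp only [mul_ite, mul_zero] at h
  rw [h, WeakComb.Mcoef]
  refine Finset.sum_congr rfl fun δ' _ => ?_
  by_cases hδ : W.φ P δ = W.φ P δ'
  · simp [WeakComb.muk, hδ]
  · simp [WeakComb.muk, hδ, Ne.symm hδ, mul_comm]

lemma Mcoef_eq_zero_of_notMem {P : W.S} (hP : P ∉ F.B) {δ : W.Δ P} {s : Fin r}
    (hs : s ≠ F.g (W.φ P δ)) : W.Mcoef F P δ s = 0 :=
  Finset.sum_eq_zero fun δ' _ =>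
    if_neg fun h => hs (h.2.symm.trans (F.fiber_off_base P hP δ' δ))

lemma sum_muC_mul_omega {P : W.S} {δ : W.Δ P}
    (hδ : ∀ s, s ≠ F.g (W.φ P δ) → W.Mcoef F P δ s = 0) (a : Fin r → ZMod p) :
    ∑ j, (W.muC P δ j : ZMod p) * W.omega F a j =
      W.Mcoef F P δ (F.g (W.φ P δ)) * a (F.g (W.φ P δ)) := by
  simp only [F.sum_mul_omega, ← F.Mcoef_eq_sum_muC]
  exact Fintype.sum_eq_single _ fun s hs => by rw [hδ s hs, zero_mul]

lemma resCond_omega {P : W.S} {δ : W.Δ P}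
    (hδ : ∀ s, s ≠ F.g (W.φ P δ) → W.Mcoef F P δ s = 0) (a b : Fin r → ZMod p) :
    W.ResCond (W.omega F a) (W.omega F b) P δ := by
  rw [WeakComb.ResCond, F.sum_muC_mul_omega hδ, F.sum_muC_mul_omega hδ]
  simp only [WeakComb.omega]
  ring

lemma wedge_omega_eq_zero {d : W.C → ℕ}
    (hM : ∀ P ∈ F.B, ∀ δ : W.Δ P, ∀ s, s ≠ F.g (W.φ P δ) → W.Mcoef F P δ s = 0)
    (hd : ∀ s : Fin r, ((∑ c : W.C, if F.g c = s then d c * F.m c else 0 : ℕ) : ZMod p) = 0)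
    (a b : Fin r → ZMod p) : W.wedge d (W.omega F a) (W.omega F b) = 0 := by
  refine W.wedge_eq_zero_of_resCond d (fun P δ => F.resCond_omega (fun s hs => ?_) a b)
    (F.sum_degree_mul_omega_eq_zero hd a) (F.sum_degree_mul_omega_eq_zero hd b)
  by_cases hP : P ∈ F.B
  · exact hM P hP δ s hs
  · exact F.Mcoef_eq_zero_of_notMem hP hs

/-- The linear map `a ↦ ω_a`, whose range is the subspace `R_φ` of `A¹`. -/
noncomputable def omegaL : (Fin r → ZMod p) →ₗ[ZMod p] (W.C → ZMod p) :=
  LinearMap.mulLeft (ZMod p) (fun c => (F.m c : ZMod p)) ∘ₗ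
    LinearMap.funLeft (ZMod p) (ZMod p) F.g

lemma omegaL_injective (hm : ∀ s, ∃ c, F.g c = s ∧ (F.m c).Coprime p) :
    Function.Injective F.omegaL := by
  intro a b hab
  funext s
  obtain ⟨c, rfl, hc⟩ := hm s
  have h : (F.m c : ZMod p) * a (F.g c) = F.m c * b (F.g c) := congrFun hab c
  exact ((ZMod.isUnit_iff_coprime _ _).2 hc).mul_left_cancel h

lemma range_omegaL_le_wedgeKer {d : W.C → ℕ} {α : W.C → ZMod p}
    (h : ∀ b, W.wedge d (W.omega F b) α = 0) : LinearMap.range F.omegaL ≤ W.wedgeKer d α := by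
  rintro _ ⟨b, rfl⟩
  exact LinearMap.mem_ker.2 (h b)

lemma le_finrank_H1_add_one [Fact p.Prime] {d : W.C → ℕ} {α : W.C → ZMod p}
    (hm : ∀ s, ∃ c, F.g c = s ∧ (F.m c).Coprime p) (h : ∀ b, W.wedge d (W.omega F b) α = 0) :
    r ≤ Module.finrank (ZMod p) (W.H1 d α) + 1 := calc
  r = Module.finrank (ZMod p) (LinearMap.range F.omegaL) := by
    rw [LinearMap.finrank_range_of_inj (F.omegaL_injective hm), Module.finrank_fin_fun]
  _ ≤ Module.finrank (ZMod p) (W.wedgeKer d α) :=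
    Submodule.finrank_mono (F.range_omegaL_le_wedgeKer h)
  _ ≤ _ := finrank_le_finrank_quotient_comap_span_singleton_add_one _ _

end QuasiFiber

section Statements

open WeakComb

variable {p : ℕ} [Fact p.Prime]

/-- Theorem `fibered`, part 2: index divisible by p. -/
theorem stmt11 (W : WeakComb p) (d : W.C → ℕ) (hd : W.IsDegree d)
    {r : ℕ} (F : QuasiFiber W r)
    (ha : ∀ P ∈ F.B, ∀ δ : W.Δ P, ∀ s : Fin r,
      s ≠ F.g (W.φ P δ) → W.Mcoef F P δ s = 0)
    (hb : ∀ s : Fin r,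
      ((∑ c : W.C, if F.g c = s then d c * F.m c else 0 : ℕ) : ZMod p) = 0) :
    (∀ a b : Fin r → ZMod p, W.wedge d (W.omega F a) (W.omega F b) = 0) ∧
    ((∀ s : Fin r, ∃ c : W.C, F.g c = s ∧ ¬ p ∣ F.m c) →
      ∀ a : Fin r → ZMod p,
        r - 1 ≤ Module.finrank (ZMod p) (W.H1 d (W.omega F a))) := by
  have hwedge := F.wedge_omega_eq_zero ha hb
  refine ⟨hwedge, fun hm a => Nat.sub_le_iff_le_add.2 ?_⟩
  refine F.le_finrank_H1_add_one (fun s => ?_) fun b => hwedge b a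
  obtain ⟨c, hc, hpc⟩ := hm s
  exact ⟨c, hc, (((Fact.out : p.Prime).coprime_iff_not_dvd).2 hpc).symm⟩

end Statements
end

section
/- Let W carry a degree assignment (d_c)_{c∈C} and a combinatorial quasi-fiber structure (g, (m_c), B) of rank r with r ≥ 2. Assume: (a) p ∤ m_c for every c ∈ C; (b) M_s(δ) = 0 in k for every P ∈ B, every δ ∈ Δ_P and every s ≠ g(φ_P(δ)); (c) Σ_{c∈g^{-1}(s)} d_c·m_c ≡ 0 (mod p) for every s ∈ {1,…,r}; (d) for each s, the restricted combinatorics W°_s is completely p-reductive with respect to ω_𝟙|_s, where 𝟙 = (1,…,1) ∈ k^r. Then W is NOT completely p-reductive with respect to ω_𝟙 = Σ_{c∈C} m_c·σ_c. (Combinatorial form of the Corollary: a quasi fiber-type curve of prime index p, with at least two fibers, whose fibers are completely p-reductive, is itself not completely p-reductive.) -/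
/-!
Call a partition `t` of the components a barrier for `α` if, for every branch `δ` and every class
of `t` not containing the component of `δ`, the `α`-weighted sum of the intersection multiplicities
of `δ` with the branches of that class vanishes in `ZMod p`. No reduction step can cross a barrier:
if `s` refines `t` and `P` is transversal between two classes of `s` lying in different classes of
`t`, then all branches at `P` lie in these two classes of `s`, so those in the second one are
exactly those in the corresponding class of `t`, and the sum required to be nonzero is one of the
vanishing ones. Hence the one-class partition is the only barrier of a completely `p`-reductive
combinatorics.

The partition into quasi-fibers is a barrier for every `ω_a`, because the weighted sums are the
`a_s M_s(δ)`, and it has several classes as soon as there are two quasi-fibers.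
-/

open scoped Classical

theorem mergeSetoid_le_iff {α : Type*} {s t : Setoid α} {c₀ c₁ : α} :
    mergeSetoid s c₀ c₁ ≤ t ↔ s ≤ t ∧ t.r c₀ c₁ := by
  constructor
  · exact fun h => ⟨fun _ _ hab => h (.rel _ _ (.inl hab)), h (.rel _ _ (.inr ⟨rfl, rfl⟩))⟩
  · rintro ⟨hst, ht⟩
    refine Setoid.eqvGen_le ?_
    rintro a b (hab | ⟨rfl, rfl⟩)
    exacts [hst hab, ht]

namespace WeakComb

variable {p : ℕ} {W : WeakComb p}

/-- A partition `t` of the components is a barrier for `p`-reduction with respect to `α` if every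
branch has `α`-weighted intersection multiplicity zero with each class of `t` other than its own.
It is a combinatorial obstruction to complete `p`-reductivity. As in `PTransversalAt`, a class is
given by a representative `c`. -/
def IsReductionBarrier (α : W.C → ZMod p) (t : Setoid W.C) : Prop :=
  ∀ (P : W.S) (δ : W.Δ P) (c : W.C), ¬ t.r (W.φ P δ) c →
    ∑ δ' : W.Δ P, (if t.r (W.φ P δ') c
      then (W.muk P δ δ' : ZMod p) * α (W.φ P δ') else 0) = 0

section Barrier

variable {α : W.C → ZMod p} {s s' t : Setoid W.C}

theorem PTransversalAt.rel_right_iff_of_le {P : W.S} {c₀ c₁ : W.C}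
    (hP : W.PTransversalAt α s P c₀ c₁) (hst : s ≤ t) (hne : ¬ t.r c₀ c₁) (δ : W.Δ P) :
    s.r (W.φ P δ) c₁ ↔ t.r (W.φ P δ) c₁ := by
  obtain ⟨-, hcover, -⟩ := hP
  refine ⟨fun h => hst h, fun h₁ => (hcover δ).resolve_left fun h₀ => hne ?_⟩
  exact t.trans' (t.symm' (hst h₀)) h₁

namespace IsReductionBarrier

theorem rel_of_pTransversalAt (ht : IsReductionBarrier α t) (hst : s ≤ t) {P : W.S} {c₀ c₁ : W.C}
    (hP : W.PTransversalAt α s P c₀ c₁) : t.r c₀ c₁ := by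
  by_contra hne
  have hclass := hP.rel_right_iff_of_le hst hne
  obtain ⟨-, -, -, -, δ, hδ, hsum⟩ := hP
  simp only [hclass] at hsum
  exact hsum (ht P δ c₁ fun h => hne (t.trans' (t.symm' (hst hδ)) h))

theorem le_of_redStep (ht : IsReductionBarrier α t) (hst : s ≤ t) (hstep : W.RedStep α s s') :
    s' ≤ t := by
  obtain ⟨P, c₀, c₁, hP, rfl⟩ := hstep
  exact mergeSetoid_le_iff.2 ⟨hst, ht.rel_of_pTransversalAt hst hP⟩

theorem le_of_reflTransGen (ht : IsReductionBarrier α t) (hst : s ≤ t)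
    (hsteps : Relation.ReflTransGen (W.RedStep α) s s') : s' ≤ t := by
  induction hsteps with
  | refl => exact hst
  | tail _ hstep ih => exact ht.le_of_redStep ih hstep

theorem eq_top (ht : IsReductionBarrier α t) (hW : W.CompletelyPReductive α) : t = ⊤ :=
  top_le_iff.1 (ht.le_of_reflTransGen bot_le hW)

end IsReductionBarrier

end Barrier

section QuasiFiber

variable {r : ℕ} (F : QuasiFiber W r)

theorem sum_muk_mul_omega (a : Fin r → ZMod p) (P : W.S) (δ : W.Δ P) (s : Fin r) :
    ∑ δ' : W.Δ P, (if F.g (W.φ P δ') = s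
      then (W.muk P δ δ' : ZMod p) * W.omega F a (W.φ P δ') else 0) = a s * W.Mcoef F P δ s := by
  rw [Mcoef, Finset.mul_sum]
  refine Finset.sum_congr rfl fun δ' _ => ?_
  by_cases hs : F.g (W.φ P δ') = s
  · by_cases hφ : W.φ P δ = W.φ P δ'
    · simp [muk, hφ]
    · simp only [hs, if_true, muk, hφ, if_false, omega, ne_eq, Ne.symm hφ, not_false_eq_true,
        and_self, Nat.cast_mul]
      ring
  · simp [hs]

theorem Mcoef_eq_zero_of_notMem_base {P : W.S} (hP : P ∉ F.B) {δ : W.Δ P} {s : Fin r}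
    (hs : s ≠ F.g (W.φ P δ)) : W.Mcoef F P δ s = 0 :=
  Finset.sum_eq_zero fun δ' _ => if_neg fun h => hs (h.2.symm.trans (F.fiber_off_base P hP δ' δ))

theorem isReductionBarrier_ker_g
    (hM : ∀ P ∈ F.B, ∀ δ : W.Δ P, ∀ s : Fin r, s ≠ F.g (W.φ P δ) → W.Mcoef F P δ s = 0)
    (a : Fin r → ZMod p) : IsReductionBarrier (W.omega F a) (Setoid.ker F.g) := by
  intro P δ c hc
  have hs : F.g c ≠ F.g (W.φ P δ) := fun h => hc h.symm
  have hzero : W.Mcoef F P δ (F.g c) = 0 := by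
    by_cases hP : P ∈ F.B
    · exact hM P hP δ _ hs
    · exact Mcoef_eq_zero_of_notMem_base F hP hs
  have hsum := sum_muk_mul_omega F a P δ (F.g c)
  rw [hzero, mul_zero] at hsum
  convert hsum using 3
  exact Setoid.ker_def

theorem ker_g_ne_top (hr : 2 ≤ r) : Setoid.ker F.g ≠ ⊤ := by
  intro htop
  have : Nontrivial (Fin r) := Fin.nontrivial_iff_two_le.2 hr
  have hconst (c c' : W.C) : F.g c = F.g c' := Setoid.eq_top_iff.1 htop c c'
  exact not_subsingleton (Fin r) ⟨F.g_surj.forall₂.2 hconst⟩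

end QuasiFiber

end WeakComb

theorem stmt15_general {p : ℕ} (W : WeakComb p) {r : ℕ} (hr : 2 ≤ r) (F : QuasiFiber W r)
    (hM : ∀ P ∈ F.B, ∀ δ : W.Δ P, ∀ s : Fin r,
      s ≠ F.g (W.φ P δ) → W.Mcoef F P δ s = 0)
    (a : Fin r → ZMod p) :
    ¬ W.CompletelyPReductive (W.omega F a) := fun hW =>
  WeakComb.ker_g_ne_top F hr ((WeakComb.isReductionBarrier_ker_g F hM a).eq_top hW)

section Statements

open WeakComb

variable {p : ℕ} [Fact p.Prime]

/-- Corollary `C_not_p_reductive`. -/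
theorem stmt15 (W : WeakComb p) (d : W.C → ℕ) (hd : W.IsDegree d)
    {r : ℕ} (hr : 2 ≤ r) (F : QuasiFiber W r)
    (hm : ∀ c : W.C, ¬ p ∣ F.m c)
    (hM : ∀ P ∈ F.B, ∀ δ : W.Δ P, ∀ s : Fin r,
      s ≠ F.g (W.φ P δ) → W.Mcoef F P δ s = 0)
    (hD : ∀ s : Fin r,
      ((∑ c : W.C, if F.g c = s then d c * F.m c else 0 : ℕ) : ZMod p) = 0)
    (hred : ∀ s : Fin r,
      (W.restrict F s).CompletelyPReductive
        (W.omegaRes F (fun _ => 1) s)) :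
    ¬ W.CompletelyPReductive (W.omega F fun _ => 1) :=
  stmt15_general W hr F hM fun _ => 1

end Statements
end
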